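/- Minimum upload cost of capacity achieving PIR_max (Corollary 5): for all integers N ≥ 2 and K ≥ 1: (i) every PIR_max scheme with K messages and N databases that has rate R = L_w/(N·L_x) = C_K(N) and in which every possible answer of every database belongs to some decoding set must have M_n ≥ N^{K−1} for every database n ∈ {1,…,N}; and (ii) there exists a capacity achieving PIR_max scheme with M_n = N^{K−1} for every n, in which the user selects a decoding set of the desired message uniformly at random among N^{K−1} decoding sets. Hence the minimum upload cost of a capacity achieving PIR_max scheme is (K−1)·log N bits per database. -/

import Mathlib

open scoped BigOperators

noncomputable section

/-- A finite probability space: a finite type together with a probability mass function. -/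
structure FinProbSpace where
  Ω : Type
  [fin : Fintype Ω]
  p : Ω → ℝ
  nonneg : ∀ ω, 0 ≤ p ω
  sum_one : ∑ ω, p ω = 1

attribute [instance] FinProbSpace.fin

namespace FinProbSpace

variable (P : FinProbSpace)

/-- Probability that the random variable `X` takes the value `a`. -/
def prob {α : Type} [DecidableEq α] (X : P.Ω → α) (a : α) : ℝ :=
  ∑ ω, if X ω = a then P.p ω else 0

/-- Shannon entropy (in bits) of a finitely valued random variable. -/
def H {α : Type} [Fintype α] [DecidableEq α] (X : P.Ω → α) : ℝ :=
  ∑ a, -(P.prob X a * Real.logb 2 (P.prob X a))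

/-- Conditional Shannon entropy `H(X | Y) = H(X, Y) - H(Y)` (in bits). -/
def condH {α β : Type} [Fintype α] [DecidableEq α] [Fintype β] [DecidableEq β]
    (X : P.Ω → α) (Y : P.Ω → β) : ℝ :=
  P.H (fun ω => (X ω, Y ω)) - P.H Y

/-- The tuple random variable `(X_i)_{i ∈ ι}`. -/
def tuple {ι V : Type} (X : ι → P.Ω → V) : P.Ω → ι → V := fun ω i => X i ω

/-- Joint (mutual) independence of a finite family of random variables. -/
def iIndep {ι V : Type} [Fintype ι] [DecidableEq ι] [DecidableEq V] (X : ι → P.Ω → V) : Prop :=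
  ∀ a : ι → V, P.prob (P.tuple X) a = ∏ i, P.prob (X i) (a i)

/-- `X` and `Y` contain the same information about everything beyond `Z`:
`H(X | Y, Z) = H(Y | X, Z) = 0`. -/
def sameInfo {α β γ : Type} [Fintype α] [DecidableEq α] [Fintype β] [DecidableEq β]
    [Fintype γ] [DecidableEq γ] (X : P.Ω → α) (Y : P.Ω → β) (Z : P.Ω → γ) : Prop :=
  P.condH X (fun ω => (Y ω, Z ω)) = 0 ∧ P.condH Y (fun ω => (X ω, Z ω)) = 0

end FinProbSpace

/-- A locally decodable code with `K` source symbols of entropy `Lw`, `M` coded symbols of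
entropy `Lx`, and locality `N`. -/
structure LDC (K N M : ℕ) (Lw Lx : ℝ) where
  P : FinProbSpace
  V : Type
  [fV : Fintype V]
  [dV : DecidableEq V]
  V' : Type
  [fV' : Fintype V']
  [dV' : DecidableEq V']
  /-- the source symbols -/
  W : Fin K → P.Ω → V
  /-- the coded symbols -/
  X : Fin M → P.Ω → V'
  indep : P.iIndep W
  HW : ∀ k, P.H (W k) = Lw
  coded_fn : ∀ m, ∃ f : (Fin K → V) → V', ∀ ω, X m ω = f (fun k => W k ω)
  HX : ∀ m, P.H (X m) = Lx
  /-- the decoding supersets -/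
  decSets : Fin K → Finset (Finset (Fin M))
  decSets_nonempty : ∀ k, (decSets k).Nonempty
  decSets_card : ∀ k, ∀ s ∈ decSets k, s.card = N
  decodes : ∀ k, ∀ s ∈ decSets k,
    P.condH (W k) (P.tuple fun i : {x // x ∈ s} => X i.1) = 0

attribute [instance] LDC.fV LDC.dV LDC.fV' LDC.dV'

/-- A universal LDC: every coded symbol appears in some decoding set of every source symbol. -/
def LDC.IsUniversal {K N M : ℕ} {Lw Lx : ℝ} (C : LDC K N M Lw Lx) : Prop :=
  ∀ (m : Fin M) (k : Fin K), ∃ s ∈ C.decSets k, m ∈ s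

/-- A perfectly smooth LDC: for each source symbol, every coded symbol lies in the same
number of decoding sets. -/
def LDC.IsSmooth {K N M : ℕ} {Lw Lx : ℝ} (C : LDC K N M Lw Lx) : Prop :=
  ∀ (k : Fin K) (m m' : Fin M),
    ((C.decSets k).filter (fun s => m ∈ s)).card =
      ((C.decSets k).filter (fun s => m' ∈ s)).card

/-- `C*(N, K) = N (1 + 1/N + ⋯ + 1/N^{K-1})⁻¹`. -/
def Cstar (N K : ℕ) : ℝ := N / (∑ j ∈ Finset.range K, (1 / (N : ℝ)) ^ j)

/-- An `N`-query information retrieval scheme with `K` messages of entropy `Lw` and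
answer sets of sizes `Mn n` with answers of entropy `Lx`. -/
structure IRScheme (K N : ℕ) (Mn : Fin N → ℕ) (Lw Lx : ℝ) where
  P : FinProbSpace
  V : Type
  [fV : Fintype V]
  [dV : DecidableEq V]
  V' : Type
  [fV' : Fintype V']
  [dV' : DecidableEq V']
  /-- the messages -/
  W : Fin K → P.Ω → V
  /-- `A n m` is the `m`-th possible answer of database `n` -/
  A : (n : Fin N) → Fin (Mn n) → P.Ω → V'
  indep : P.iIndep W
  HW : ∀ k, P.H (W k) = Lw
  ans_fn : ∀ n m, ∃ f : (Fin K → V) → V', ∀ ω, A n m ω = f (fun k => W k ω)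
  HA : ∀ n m, P.H (A n m) = Lx
  /-- the decoding supersets: each decoding set consists of one answer index per database -/
  Q : Fin K → Finset ((n : Fin N) → Fin (Mn n))
  Q_nonempty : ∀ k, (Q k).Nonempty
  decodes : ∀ k, ∀ q ∈ Q k, P.condH (W k) (P.tuple fun n => A n (q n)) = 0

attribute [instance] IRScheme.fV IRScheme.dV IRScheme.fV' IRScheme.dV'

/-- A repudiative (RIR_max) scheme: every possible answer of every database appears in some
decoding set of every message. -/
def IRScheme.IsRIR {K N : ℕ} {Mn : Fin N → ℕ} {Lw Lx : ℝ} (C : IRScheme K N Mn Lw Lx) : Prop :=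
  ∀ (n : Fin N) (m : Fin (Mn n)) (k : Fin K), ∃ q ∈ C.Q k, q n = m

/-- A perfectly private (PIR_max) scheme: for each message there is a distribution on its
decoding sets such that the marginal distribution of the query to each database does not
depend on the message. -/
def IRScheme.IsPIR {K N : ℕ} {Mn : Fin N → ℕ} {Lw Lx : ℝ} (C : IRScheme K N Mn Lw Lx) : Prop :=
  ∃ μ : Fin K → ((n : Fin N) → Fin (Mn n)) → ℝ,
    (∀ k q, 0 ≤ μ k q) ∧ (∀ k, ∑ q ∈ C.Q k, μ k q = 1) ∧
    (∀ (k k' : Fin K) (n : Fin N) (m : Fin (Mn n)),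
      ∑ q ∈ (C.Q k).filter (fun q => q n = m), μ k q =
        ∑ q ∈ (C.Q k').filter (fun q => q n = m), μ k' q)

/-- `C_K(N) = (1 + 1/N + ⋯ + 1/N^{K-1})⁻¹`, the capacity of PIR. -/
def CK (N K : ℕ) : ℝ := (∑ j ∈ Finset.range K, (1 / (N : ℝ)) ^ j)⁻¹

namespace FinProbSpace

variable (P : FinProbSpace)

open Classical in
/-- Probability of the `s`-class of `ω`. -/
def cell (s : Setoid P.Ω) (ω : P.Ω) : ℝ := ∑ ω', if s ω ω' then P.p ω' else 0

/-- Shannon entropy (in bits) of the partition of the sample space induced by `s`. -/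
def ent (s : Setoid P.Ω) : ℝ := -∑ ω, P.p ω * Real.logb 2 (P.cell s ω)

theorem cell_ker {α : Type} [DecidableEq α] (X : P.Ω → α) (ω : P.Ω) :
    P.cell (Setoid.ker X) ω = P.prob X (X ω) := by
  unfold cell prob
  refine Finset.sum_congr rfl fun ω' _ => ?_
  simp [Setoid.ker_def, eq_comm]

theorem sum_prob_mul {α : Type} [Fintype α] [DecidableEq α] (X : P.Ω → α) (F : α → ℝ) :
    ∑ a, P.prob X a * F a = ∑ ω, P.p ω * F (X ω) := by
  simp_rw [prob, Finset.sum_mul, ite_mul, zero_mul]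
  rw [Finset.sum_comm]
  simp

theorem H_eq_ent {α : Type} [Fintype α] [DecidableEq α] (X : P.Ω → α) :
    P.H X = P.ent (Setoid.ker X) := by
  simp_rw [H, ent, cell_ker, Finset.sum_neg_distrib]
  rw [P.sum_prob_mul X fun a => Real.logb 2 (P.prob X a)]

theorem cell_nonneg (s : Setoid P.Ω) (ω : P.Ω) : 0 ≤ P.cell s ω :=
  Finset.sum_nonneg fun ω' _ => by split_ifs <;> simp [P.nonneg]

theorem le_cell (s : Setoid P.Ω) (ω : P.Ω) : P.p ω ≤ P.cell s ω := by
  classical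
  have := Finset.single_le_sum (f := fun ω' => if s ω ω' then P.p ω' else 0)
    (fun ω' _ => by split_ifs <;> simp [P.nonneg]) (Finset.mem_univ ω)
  simp only [s.refl' ω, if_true] at this
  exact this.trans (le_of_eq (Finset.sum_congr rfl fun _ _ => by congr))

theorem cell_pos (s : Setoid P.Ω) {ω : P.Ω} (h : 0 < P.p ω) : 0 < P.cell s ω :=
  h.trans_le (P.le_cell s ω)

theorem cell_mono {s t : Setoid P.Ω} (h : s ≤ t) (ω : P.Ω) : P.cell s ω ≤ P.cell t ω := by
  refine Finset.sum_le_sum fun ω' _ => ?_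
  by_cases h1 : s ω ω'
  · simp [h1, h h1]
  · simp only [h1, if_false]
    split_ifs <;> simp [P.nonneg]

theorem cell_congr (s : Setoid P.Ω) {ω ω' : P.Ω} (h : s ω ω') : P.cell s ω = P.cell s ω' := by
  refine Finset.sum_congr rfl fun ω'' _ => ?_
  have : s ω ω'' ↔ s ω' ω'' := ⟨s.trans' (s.symm' h), s.trans' h⟩
  split_ifs <;> tauto

theorem ent_anti {s t : Setoid P.Ω} (h : s ≤ t) : P.ent t ≤ P.ent s := by
  refine neg_le_neg (Finset.sum_le_sum fun ω _ => ?_)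
  rcases (P.nonneg ω).eq_or_lt with h0 | h0
  · simp [← h0]
  · exact mul_le_mul_of_nonneg_left
      (Real.logb_le_logb_of_le one_lt_two (P.cell_pos s h0) (P.cell_mono h ω)) h0.le

open Classical in
theorem sum_cell_ratio_le_one {a b c : Setoid P.Ω} (ha : a ≤ c) (hb : b ≤ c) :
    ∑ ω, P.p ω * (P.cell a ω * P.cell b ω / (P.cell c ω * P.cell (a ⊓ b) ω)) ≤ 1 := by
  have inner (ω₁ ω₂ : P.Ω) :
      ∑ ω, (if a ω ω₁ ∧ b ω ω₂ then P.p ω / (P.cell c ω * P.cell (a ⊓ b) ω) else 0) ≤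
        if c ω₁ ω₂ then 1 / P.cell c ω₁ else 0 := by
    by_cases hex : ∃ ω₀, a ω₀ ω₁ ∧ b ω₀ ω₂
    · obtain ⟨ω₀, h1, h2⟩ := hex
      have hc : c ω₁ ω₂ := c.trans' (c.symm' (ha h1)) (hb h2)
      have key : ∀ ω, (if a ω ω₁ ∧ b ω ω₂ then P.p ω / (P.cell c ω * P.cell (a ⊓ b) ω) else 0)
          = (if (a ⊓ b) ω₀ ω then P.p ω else 0) / (P.cell c ω₁ * P.cell (a ⊓ b) ω₀) := by
        intro ω
        have hiff : (a ω ω₁ ∧ b ω ω₂) ↔ (a ⊓ b) ω₀ ω := by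
          constructor
          · rintro ⟨h3, h4⟩
            exact ⟨a.trans' h1 (a.symm' h3), b.trans' h2 (b.symm' h4)⟩
          · rintro ⟨h3, h4⟩
            exact ⟨a.trans' (a.symm' h3) h1, b.trans' (b.symm' h4) h2⟩
        by_cases h : (a ⊓ b) ω₀ ω
        · rw [if_pos (hiff.2 h), if_pos h, P.cell_congr (a ⊓ b) h,
            P.cell_congr c (ha (hiff.2 h).1)]
        · rw [if_neg (fun h' => h (hiff.1 h')), if_neg h, zero_div]
      rw [Finset.sum_congr rfl fun ω _ => key ω, ← Finset.sum_div, if_pos hc]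
      change P.cell (a ⊓ b) ω₀ / _ ≤ _
      rw [mul_comm, ← div_div]
      exact div_le_div_of_nonneg_right (div_self_le_one _) (P.cell_nonneg _ _)
    · rw [Finset.sum_eq_zero fun ω _ => if_neg fun h => hex ⟨ω, h⟩]
      split_ifs
      · exact one_div_nonneg.2 (P.cell_nonneg _ _)
      · exact le_rfl
  calc ∑ ω, P.p ω * (P.cell a ω * P.cell b ω / (P.cell c ω * P.cell (a ⊓ b) ω))
      = ∑ ω, ∑ ω₁, ∑ ω₂, P.p ω₁ * P.p ω₂ *
          (if a ω ω₁ ∧ b ω ω₂ then P.p ω / (P.cell c ω * P.cell (a ⊓ b) ω) else 0) := by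
        refine Finset.sum_congr rfl fun ω _ => ?_
        rw [mul_div_assoc', mul_comm (P.p ω), mul_div_assoc]
        conv_lhs => enter [1]; rw [cell, cell, Finset.sum_mul_sum]
        rw [Finset.sum_mul]
        refine Finset.sum_congr rfl fun ω₁ _ => ?_
        rw [Finset.sum_mul]
        refine Finset.sum_congr rfl fun ω₂ _ => ?_
        by_cases h1 : a ω ω₁ <;> by_cases h2 : b ω ω₂ <;> simp [h1, h2]
    _ = ∑ ω₁, ∑ ω₂, P.p ω₁ * P.p ω₂ *
          ∑ ω, (if a ω ω₁ ∧ b ω ω₂ then P.p ω / (P.cell c ω * P.cell (a ⊓ b) ω) else 0) := by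
        rw [Finset.sum_comm]
        refine Finset.sum_congr rfl fun ω₁ _ => ?_
        rw [Finset.sum_comm]
        refine Finset.sum_congr rfl fun ω₂ _ => ?_
        rw [Finset.mul_sum]
    _ ≤ ∑ ω₁, ∑ ω₂, P.p ω₁ * P.p ω₂ * (if c ω₁ ω₂ then 1 / P.cell c ω₁ else 0) := by
        gcongr with ω₁ _ ω₂ _
        · exact mul_nonneg (P.nonneg _) (P.nonneg _)
        · exact inner ω₁ ω₂
    _ = ∑ ω₁, P.p ω₁ * (P.cell c ω₁ / P.cell c ω₁) := by
        refine Finset.sum_congr rfl fun ω₁ _ => ?_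
        conv_rhs => rw [cell, Finset.sum_div, Finset.mul_sum]
        refine Finset.sum_congr rfl fun ω₂ _ => ?_
        split_ifs
        · rw [mul_assoc, mul_one_div]; rfl
        · simp
    _ ≤ ∑ ω₁, P.p ω₁ := Finset.sum_le_sum fun ω₁ _ =>
        mul_le_of_le_one_right (P.nonneg _) (div_self_le_one _)
    _ = 1 := P.sum_one

/-- Submodularity of entropy. -/
theorem ent_submodular {a b c : Setoid P.Ω} (ha : a ≤ c) (hb : b ≤ c) :
    P.ent (a ⊓ b) + P.ent c ≤ P.ent a + P.ent b := by
  have h2 : 0 < Real.log 2 := Real.log_pos one_lt_two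
  have term (ω : P.Ω) : P.p ω * (Real.logb 2 (P.cell a ω) + Real.logb 2 (P.cell b ω)
      - Real.logb 2 (P.cell c ω) - Real.logb 2 (P.cell (a ⊓ b) ω)) ≤
      (P.p ω * (P.cell a ω * P.cell b ω / (P.cell c ω * P.cell (a ⊓ b) ω)) - P.p ω)
        / Real.log 2 := by
    rcases (P.nonneg ω).eq_or_lt with h0 | h0
    · simp [← h0]
    · have pa := P.cell_pos a h0
      have pb := P.cell_pos b h0
      have pc := P.cell_pos c h0
      have pd := P.cell_pos (a ⊓ b) h0
      have hlog := Real.log_le_sub_one_of_pos (div_pos (mul_pos pa pb) (mul_pos pc pd))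
      rw [Real.log_div (mul_pos pa pb).ne' (mul_pos pc pd).ne', Real.log_mul pa.ne' pb.ne',
        Real.log_mul pc.ne' pd.ne'] at hlog
      rw [le_div_iff₀ h2]
      simp only [Real.logb]
      have := mul_le_mul_of_nonneg_left hlog h0.le
      field_simp at this ⊢
      linarith
  have hsum := Finset.sum_le_sum fun ω (_ : ω ∈ Finset.univ) => term ω
  rw [← Finset.sum_div, Finset.sum_sub_distrib, P.sum_one] at hsum
  have hneg := hsum.trans
    (div_nonpos_of_nonpos_of_nonneg (sub_nonpos.2 (P.sum_cell_ratio_le_one ha hb)) h2.le)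
  simp only [mul_sub, mul_add, Finset.sum_sub_distrib, Finset.sum_add_distrib] at hneg
  unfold ent
  linarith

theorem ent_top : P.ent ⊤ = 0 := by
  have (ω : P.Ω) : P.cell ⊤ ω = 1 := by
    rw [← P.sum_one]
    exact Finset.sum_congr rfl fun _ _ => if_pos trivial
  simp [ent, this]

theorem ent_inf_le {ι : Type} (T : Finset ι) (S : ι → Setoid P.Ω) (w : Setoid P.Ω) :
    P.ent (T.inf S ⊓ w) ≤ P.ent w + ∑ i ∈ T, (P.ent (S i ⊓ w) - P.ent w) := by
  classical
  induction T using Finset.induction_on with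
  | empty => simp
  | insert i T hi ih =>
    have := P.ent_submodular (a := S i ⊓ w) (b := T.inf S ⊓ w) inf_le_right inf_le_right
    rw [Finset.sum_insert hi, Finset.inf_insert]
    rw [← inf_inf_distrib_right] at this
    linarith

/-- If `d` determines `w`, then it does so in the presence of `v`. -/
theorem ent_inf_of_determines {d w : Setoid P.Ω} (h : P.ent (w ⊓ d) = P.ent d)
    (v : Setoid P.Ω) : P.ent (d ⊓ (w ⊓ v)) = P.ent (d ⊓ v) := by
  refine le_antisymm ?_ (P.ent_anti (inf_le_inf_left _ inf_le_right))
  have := P.ent_submodular (a := w ⊓ d) (b := d ⊓ v) (c := d) inf_le_right inf_le_left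
  have e : w ⊓ d ⊓ (d ⊓ v) = d ⊓ (w ⊓ v) := by
    rw [inf_comm w d, inf_assoc, inf_left_comm w, ← inf_assoc, inf_idem]
  rw [e] at this
  linarith

theorem ent_ker_tuple_of_iIndep {ι V : Type} [Fintype ι] [DecidableEq ι] [DecidableEq V]
    {X : ι → P.Ω → V} (h : P.iIndep X) :
    P.ent (Setoid.ker (P.tuple X)) = ∑ i, P.ent (Setoid.ker (X i)) := by
  simp only [ent, Finset.sum_neg_distrib, neg_inj]
  rw [Finset.sum_comm]
  refine Finset.sum_congr rfl fun ω _ => ?_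
  rcases (P.nonneg ω).eq_or_lt with h0 | h0
  · simp [← h0]
  · have hne (i : ι) : P.cell (Setoid.ker (X i)) ω ≠ 0 := (P.cell_pos _ h0).ne'
    rw [← Finset.mul_sum, ← Real.logb_prod _ _ fun i _ => hne i]
    simp_rw [cell_ker]
    rw [h]
    rfl

/-- Any subfamily of an independent family has additive entropy. -/
theorem ent_inf_eq_of_additive {K : ℕ} {w : Fin K → Setoid P.Ω} {L : ℝ}
    (hw : ∀ k, P.ent (w k) = L) (hall : P.ent (Finset.univ.inf w) = K * L)
    (s : Finset (Fin K)) : P.ent (s.inf w) = s.card * L := by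
  have bound (t : Finset (Fin K)) : P.ent (t.inf w) ≤ t.card * L := by
    have := P.ent_inf_le t w ⊤
    simpa [ent_top, hw] using this
  have hsub := P.ent_submodular (a := s.inf w) (b := sᶜ.inf w) (c := ⊤) le_top le_top
  rw [← Finset.inf_union, Finset.union_compl, hall, ent_top] at hsub
  have hc := bound sᶜ
  have hcard : (s.card : ℝ) + (sᶜ.card : ℝ) = K := by
    exact_mod_cast (Finset.card_add_card_compl s).trans (Fintype.card_fin K)
  have := bound s
  rw [← hcard] at hsub
  linarith

end FinProbSpace

/-- The partitions of the sample space induced by messages and answers of a retrieval scheme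
whose answers have the smallest possible entropy. -/
structure TightSystem (P : FinProbSpace) (K N : ℕ) (I : Type) where
  msg : Fin K → Setoid P.Ω
  ans : I → Setoid P.Ω
  /-- the database that gives an answer -/
  db : I → Fin N
  L : ℝ
  L_pos : 0 < L
  N_pos : 0 < N
  ent_msg : ∀ s : Finset (Fin K), P.ent (s.inf msg) = s.card * L
  ent_ans : ∀ i, P.ent (ans i) = L / N * ∑ t ∈ Finset.range K, (1 / (N : ℝ)) ^ t
  msg_le : ∀ i, Finset.univ.inf msg ≤ ans i
  cover : ∀ k i, ∃ q : Fin N → I, (∀ n, db (q n) = n) ∧ q (db i) = i ∧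
    P.ent (msg k ⊓ Finset.univ.inf (ans ∘ q)) = P.ent (Finset.univ.inf (ans ∘ q))

namespace TightSystem

variable {P : FinProbSpace} {K N : ℕ} {I : Type} (T : TightSystem P K N I)

/-- The entropy of an answer given `j` messages. -/
def level (j : ℕ) : ℝ := T.L / N * ∑ t ∈ Finset.range (K - j), (1 / (N : ℝ)) ^ t

theorem N_cast_pos (T : TightSystem P K N I) : (0 : ℝ) < N := Nat.cast_pos.2 T.N_pos

theorem level_step {j : ℕ} (hj : j < K) : N * T.level j = T.L + T.level (j + 1) := by
  have hN := T.N_cast_pos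
  obtain ⟨d, rfl⟩ := Nat.exists_eq_add_of_lt hj
  have h1 : j + d + 1 - j = d + 1 := by omega
  have h2 : j + d + 1 - (j + 1) = d := by omega
  rw [level, level, h1, h2, Finset.sum_range_succ']
  simp_rw [pow_succ]
  rw [← Finset.sum_mul]
  field_simp
  ring

theorem level_pos {j : ℕ} (hj : j < K) : 0 < T.level j := by
  have hN := T.N_cast_pos
  refine mul_pos (div_pos T.L_pos hN) (Finset.sum_pos (fun _ _ => by positivity) ?_)
  exact Finset.nonempty_range_iff.2 (by omega)

theorem level_top : T.level K = 0 := by simp [level]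

/-- The entropy of an answer together with the messages indexed by `s`. -/
def joint (s : Finset (Fin K)) (i : I) : ℝ := P.ent (T.ans i ⊓ s.inf T.msg)

/-- A set of answers, one from each database, that determines the message `k`. -/
def Decodes (k : Fin K) (q : Fin N → I) : Prop :=
  P.ent (T.msg k ⊓ Finset.univ.inf (T.ans ∘ q)) = P.ent (Finset.univ.inf (T.ans ∘ q))

variable {T} in
theorem Decodes.ent_insert {k : Fin K} {q : Fin N → I} (h : T.Decodes k q)
    (s : Finset (Fin K)) :
    P.ent (Finset.univ.inf (T.ans ∘ q) ⊓ (insert k s).inf T.msg) =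
      P.ent (Finset.univ.inf (T.ans ∘ q) ⊓ s.inf T.msg) := by
  rw [Finset.inf_insert]
  exact P.ent_inf_of_determines h _

theorem ent_answers_le (s : Finset (Fin K)) (t : Finset (Fin N)) (q : Fin N → I) :
    P.ent (t.inf (T.ans ∘ q) ⊓ s.inf T.msg) ≤
      s.card * T.L + ∑ n ∈ t, (T.joint s (q n) - s.card * T.L) := by
  have := P.ent_inf_le t (T.ans ∘ q) (s.inf T.msg)
  rwa [T.ent_msg] at this

theorem joint_le_ent_answers (s : Finset (Fin K)) (q : Fin N → I) (n : Fin N) :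
    T.joint s (q n) ≤ P.ent (Finset.univ.inf (T.ans ∘ q) ⊓ s.inf T.msg) :=
  P.ent_anti (inf_le_inf_right _ (Finset.inf_le (f := T.ans ∘ q) (Finset.mem_univ n)))

theorem card_lt_of_notMem {s : Finset (Fin K)} {k : Fin K} (hk : k ∉ s) : s.card < K := by
  have := Finset.card_le_univ (insert k s)
  rw [Finset.card_insert_of_notMem hk, Fintype.card_fin] at this
  omega

theorem joint_le (s : Finset (Fin K)) (i : I) : T.joint s i ≤ s.card * T.L + T.level s.card := by
  induction s using Finset.induction_on generalizing i with
  | empty => simp [joint, level, T.ent_ans]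
  | insert k s hk ih =>
    obtain ⟨q, -, hqi, hq⟩ := T.cover k i
    have h1 := T.joint_le_ent_answers (insert k s) q (T.db i)
    rw [Decodes.ent_insert hq, hqi] at h1
    have h2 := T.ent_answers_le s Finset.univ q
    have h3 : ∑ n, (T.joint s (q n) - s.card * T.L) ≤ ∑ _n : Fin N, T.level s.card :=
      Finset.sum_le_sum fun n _ => by linarith [ih (q n)]
    have h4 := T.level_step (card_lt_of_notMem hk)
    simp only [Finset.sum_const, Finset.card_univ, Fintype.card_fin, nsmul_eq_mul] at h3
    rw [Finset.card_insert_of_notMem hk]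
    push_cast
    linarith

theorem joint_eq (s : Finset (Fin K)) (i : I) : T.joint s i = s.card * T.L + T.level s.card := by
  induction hd : K - s.card generalizing s i with
  | zero =>
    have hs : s = Finset.univ := by
      rw [← Finset.card_eq_iff_eq_univ, Fintype.card_fin]
      have := Finset.card_le_univ s
      rw [Fintype.card_fin] at this
      omega
    subst hs
    rw [joint, inf_eq_right.2 (T.msg_le i), T.ent_msg, Finset.card_univ, Fintype.card_fin,
      T.level_top, add_zero]
  | succ d ih =>
    obtain ⟨k, hk⟩ : ∃ k, k ∉ s := by
      by_contra! h
      rw [Finset.eq_univ_iff_forall.2 h, Finset.card_univ, Fintype.card_fin] at hd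
      omega
    obtain ⟨q, -, hqi, hq⟩ := T.cover k i
    have h1 := T.joint_le_ent_answers (insert k s) q (T.db i)
    rw [Decodes.ent_insert hq, ih _ _ (by rw [Finset.card_insert_of_notMem hk]; omega),
      Finset.card_insert_of_notMem hk] at h1
    have h2 := T.ent_answers_le s Finset.univ q
    have h3 : ∑ n, (T.joint s (q n) - s.card * T.L) ≤
        ∑ n, (if n = T.db i then T.joint s i - s.card * T.L - T.level s.card else 0) +
          ∑ _n : Fin N, T.level s.card := by
      rw [← Finset.sum_add_distrib]
      refine Finset.sum_le_sum fun n _ => ?_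
      split_ifs with hn
      · rw [hn, hqi]; linarith
      · linarith [T.joint_le s (q n)]
    have h4 := T.level_step (card_lt_of_notMem hk)
    simp only [Finset.sum_const, Finset.card_univ, Fintype.card_fin, nsmul_eq_mul,
      Finset.sum_ite_eq', Finset.mem_univ, if_true] at h3
    push_cast at h1
    refine le_antisymm (T.joint_le s i) ?_
    linarith

/-- Two answers carry the same information once the messages indexed by `s` are known. -/
def Equivalent (s : Finset (Fin K)) (i j : I) : Prop :=
  P.ent (T.ans i ⊓ T.ans j ⊓ s.inf T.msg) ≤ s.card * T.L + T.level s.card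

variable {T} {s : Finset (Fin K)} {i j l : I} {k : Fin K} {q : Fin N → I}

theorem Equivalent.refl (s : Finset (Fin K)) (i : I) : T.Equivalent s i i := by
  rw [Equivalent, inf_idem]
  exact T.joint_le s i

theorem Equivalent.symm (h : T.Equivalent s i j) : T.Equivalent s j i := by
  rwa [Equivalent, inf_comm (T.ans j)]

theorem Equivalent.trans (h : T.Equivalent s i j) (h' : T.Equivalent s j l) :
    T.Equivalent s i l := by
  have hsub := P.ent_submodular (a := T.ans i ⊓ T.ans j ⊓ s.inf T.msg)
    (b := T.ans j ⊓ T.ans l ⊓ s.inf T.msg) (c := T.ans j ⊓ s.inf T.msg)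
    (inf_le_inf_right _ inf_le_right) (inf_le_inf_right _ inf_le_left)
  have hj := T.joint_eq s j
  have hanti := P.ent_anti (s := T.ans i ⊓ T.ans j ⊓ s.inf T.msg ⊓
    (T.ans j ⊓ T.ans l ⊓ s.inf T.msg)) (t := T.ans i ⊓ T.ans l ⊓ s.inf T.msg)
    (le_inf (le_inf (inf_le_left.trans (inf_le_left.trans inf_le_left))
      (inf_le_right.trans (inf_le_left.trans inf_le_right))) (inf_le_left.trans inf_le_right))
  unfold Equivalent joint at *
  linarith

theorem Equivalent.insert_left (k : Fin K) (h : T.Equivalent s i j) :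
    T.Equivalent (insert k s) i j := by
  have hsub := P.ent_submodular (a := T.ans i ⊓ T.ans j ⊓ s.inf T.msg)
    (b := T.ans j ⊓ (insert k s).inf T.msg) (c := T.ans j ⊓ s.inf T.msg)
    (inf_le_inf_right _ inf_le_right)
    (inf_le_inf_left _ (Finset.inf_mono (Finset.subset_insert k s)))
  have hj := T.joint_eq s j
  have hj' := T.joint_eq (insert k s) j
  have hanti := P.ent_anti (s := T.ans i ⊓ T.ans j ⊓ s.inf T.msg ⊓
    (T.ans j ⊓ (insert k s).inf T.msg))
    (t := T.ans i ⊓ T.ans j ⊓ (insert k s).inf T.msg)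
    (le_inf (inf_le_left.trans inf_le_left) (inf_le_right.trans inf_le_right))
  unfold Equivalent joint at *
  linarith

theorem Decodes.equivalent (hq : T.Decodes k q) (hk : k ∈ s) (m n : Fin N) :
    T.Equivalent s (q m) (q n) := by
  obtain ⟨s, hks, rfl⟩ : ∃ t, k ∉ t ∧ insert k t = s :=
    ⟨s.erase k, Finset.notMem_erase k s, Finset.insert_erase hk⟩
  have h1 := T.ent_answers_le s Finset.univ q
  rw [← hq.ent_insert] at h1
  have h2 := P.ent_anti (inf_le_inf_right ((insert k s).inf T.msg)
    (le_inf (Finset.inf_le (f := T.ans ∘ q) (Finset.mem_univ m))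
      (Finset.inf_le (f := T.ans ∘ q) (Finset.mem_univ n))))
  simp only [T.joint_eq, add_sub_cancel_left, Finset.sum_const, Finset.card_univ,
    Fintype.card_fin, nsmul_eq_mul, T.level_step (card_lt_of_notMem hks)] at h1
  rw [Equivalent, Finset.card_insert_of_notMem hks]
  push_cast
  simp only [Function.comp_apply] at h2
  linarith

theorem Decodes.eq_of_equivalent (hq : T.Decodes k q) (hk : k ∉ s) {m n : Fin N}
    (h : T.Equivalent s (q m) (q n)) : m = n := by
  by_contra hmn
  have hm : m ∈ Finset.univ.erase n := Finset.mem_erase.2 ⟨hmn, Finset.mem_univ m⟩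
  have h1 := T.ent_answers_le s (Finset.univ.erase n) q
  have h2 := T.joint_le_ent_answers (insert k s) q n
  have hsub := P.ent_submodular (a := (Finset.univ.erase n).inf (T.ans ∘ q) ⊓ s.inf T.msg)
    (b := T.ans (q m) ⊓ T.ans (q n) ⊓ s.inf T.msg) (c := T.ans (q m) ⊓ s.inf T.msg)
    (inf_le_inf_right _ (Finset.inf_le (f := T.ans ∘ q) hm))
    (inf_le_inf_right _ inf_le_left)
  have hanti := P.ent_anti (s := (Finset.univ.erase n).inf (T.ans ∘ q) ⊓ s.inf T.msg ⊓
    (T.ans (q m) ⊓ T.ans (q n) ⊓ s.inf T.msg)) (t := Finset.univ.inf (T.ans ∘ q) ⊓ s.inf T.msg)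
    (by
      rw [← Finset.insert_erase (Finset.mem_univ n), Finset.inf_insert,
        Finset.insert_erase (Finset.mem_univ n)]
      exact le_inf (le_inf (inf_le_right.trans (inf_le_left.trans inf_le_right))
        (inf_le_left.trans inf_le_left)) (inf_le_left.trans inf_le_right))
  have hlt := card_lt_of_notMem hk
  have hstep := T.level_step hlt
  have hpos := T.level_pos hlt
  have hj := T.joint_eq s (q m)
  rw [hq.ent_insert, T.joint_eq, Finset.card_insert_of_notMem hk] at h2
  simp only [T.joint_eq, add_sub_cancel_left, Finset.sum_const, Finset.card_univ,
    Fintype.card_fin, nsmul_eq_mul, Finset.card_erase_of_mem (Finset.mem_univ n),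
    Nat.cast_sub (Nat.one_le_iff_ne_zero.2 T.N_pos.ne')] at h1
  push_cast at h1 h2
  unfold Equivalent joint at *
  linarith

/-- Each database has `N ^ (K - |s|)` answers that are pairwise inequivalent given the messages
indexed by `s`. -/
theorem exists_inequivalent_family (T : TightSystem P K N I) (hdb : ∀ n, ∃ i, T.db i = n)
    (s : Finset (Fin K)) (hs : s.Nonempty) (n : Fin N) :
    ∃ (β : Type) (_ : Fintype β) (g : β → I), Fintype.card β = N ^ (K - s.card) ∧
      (∀ b, T.db (g b) = n) ∧ ∀ b b', T.Equivalent s (g b) (g b') → b = b' := by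
  induction hd : K - s.card generalizing s n with
  | zero =>
    obtain ⟨i, hi⟩ := hdb n
    exact ⟨Unit, inferInstance, fun _ => i, by simp, fun _ => hi, fun _ _ _ => rfl⟩
  | succ d ih =>
    obtain ⟨k, hk⟩ : ∃ k, k ∉ s := by
      by_contra! h
      rw [Finset.eq_univ_iff_forall.2 h, Finset.card_univ, Fintype.card_fin] at hd
      omega
    obtain ⟨k', hk'⟩ := hs
    obtain ⟨β, _, g, hcard, -, hg⟩ := ih (insert k s) (Finset.insert_nonempty k s) n
      (by rw [Finset.card_insert_of_notMem hk]; omega)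
    choose q hq hqi hqd using T.cover k
    choose r hr hri hrd using T.cover k'
    have back (i : I) : T.Equivalent s (r i n) i := by
      have := Decodes.equivalent (hrd i) hk' n (T.db i)
      rwa [hri] at this
    have same (i : I) (m : Fin N) : T.Equivalent (insert k s) (q i m) i := by
      have := Decodes.equivalent (hqd i) (Finset.mem_insert_self k s) m (T.db i)
      rwa [hqi] at this
    refine ⟨β × Fin N, inferInstance, fun x => r (q (g x.1) x.2) n, ?_, fun x => hr _ n, ?_⟩
    · rw [Fintype.card_prod, hcard, Fintype.card_fin, pow_succ]
    · rintro ⟨b, m⟩ ⟨b', m'⟩ h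
      have h1 : T.Equivalent s (q (g b) m) (q (g b') m') := ((back _).symm.trans h).trans (back _)
      obtain rfl : b = b' :=
        hg b b' (((same _ m).symm.trans (h1.insert_left k)).trans (same _ m'))
      rw [Decodes.eq_of_equivalent (hqd (g b)) hk h1]

theorem pow_le_card_answers (T : TightSystem P K N I) [Finite I] (hK : 1 ≤ K)
    (hdb : ∀ n, ∃ i, T.db i = n) (n : Fin N) :
    N ^ (K - 1) ≤ Nat.card {i // T.db i = n} := by
  obtain ⟨β, _, g, hcard, hgn, hg⟩ := T.exists_inequivalent_family hdb {⟨0, hK⟩}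
    (Finset.singleton_nonempty _) n
  rw [Finset.card_singleton] at hcard
  rw [← hcard, ← Nat.card_eq_fintype_card]
  refine Nat.card_le_card_of_injective (fun b => (⟨g b, hgn b⟩ : {i // T.db i = n})) ?_
  intro b b' h
  refine hg b b' ?_
  rw [show g b = g b' from congrArg Subtype.val h]
  exact Equivalent.refl _ _

end TightSystem

namespace IRScheme

variable {K N : ℕ} {Mn : Fin N → ℕ} {Lw Lx : ℝ} (C : IRScheme K N Mn Lw Lx)

theorem ker_tuple_eq_inf {P : FinProbSpace} {ι V : Type} [Fintype ι] (X : ι → P.Ω → V) :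
    Setoid.ker (P.tuple X) = Finset.univ.inf fun i => Setoid.ker (X i) := by
  refine le_antisymm (Finset.le_inf fun i _ x y h => congrFun h i) fun x y h => ?_
  exact funext fun i => Finset.inf_le (f := fun i => Setoid.ker (X i)) (Finset.mem_univ i) h

theorem ker_prodMk_eq_inf {Ω α β : Type} (X : Ω → α) (Y : Ω → β) :
    Setoid.ker (fun ω => (X ω, Y ω)) = Setoid.ker X ⊓ Setoid.ker Y :=
  Setoid.ext fun _ _ => Prod.mk_inj

theorem ent_eq_of_condH_eq_zero {P : FinProbSpace} {α β : Type} [Fintype α] [DecidableEq α]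
    [Fintype β] [DecidableEq β] {X : P.Ω → α} {Y : P.Ω → β} (h : P.condH X Y = 0) :
    P.ent (Setoid.ker X ⊓ Setoid.ker Y) = P.ent (Setoid.ker Y) := by
  rw [FinProbSpace.condH, P.H_eq_ent, P.H_eq_ent, ker_prodMk_eq_inf] at h
  exact sub_eq_zero.1 h

/-- The answers that are requested with positive probability form a tight system if the scheme
achieves capacity. -/
def tightSystem (hN : 0 < N) (hLw : 0 < Lw) (hLx : 0 < Lx) (hrate : Lw / (N * Lx) = CK N K)
    (G : (Σ n, Fin (Mn n)) → Prop)
    (hG : ∀ k x, G x → ∃ q ∈ C.Q k, q x.1 = x.2 ∧ ∀ n, G ⟨n, q n⟩) :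
    TightSystem C.P K N {x // G x} where
  msg k := Setoid.ker (C.W k)
  ans x := Setoid.ker (C.A x.1.1 x.1.2)
  db x := x.1.1
  L := Lw
  L_pos := hLw
  N_pos := hN
  ent_msg := by
    refine C.P.ent_inf_eq_of_additive (fun k => by rw [← C.P.H_eq_ent, C.HW]) ?_
    rw [← ker_tuple_eq_inf, C.P.ent_ker_tuple_of_iIndep C.indep]
    simp [← C.P.H_eq_ent, C.HW]
  ent_ans x := by
    have hN' : (0 : ℝ) < N := Nat.cast_pos.2 hN
    have hc : CK N K ≠ 0 := by rw [← hrate]; positivity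
    rw [← C.P.H_eq_ent, C.HA]
    unfold CK at hrate hc
    have hs := inv_ne_zero hc
    rw [inv_inv] at hs
    field_simp at hrate ⊢
    linarith
  msg_le x := by
    obtain ⟨f, hf⟩ := C.ans_fn x.1.1 x.1.2
    rw [← ker_tuple_eq_inf]
    intro ω ω' h
    rw [Setoid.ker_def, hf, hf]
    exact congrArg f h
  cover k x := by
    obtain ⟨q, hq, hqx, hqG⟩ := hG k x.1 x.2
    refine ⟨fun n => ⟨⟨n, q n⟩, hqG n⟩, fun n => rfl, ?_, ?_⟩
    · refine Subtype.ext ?_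
      change (⟨x.1.1, q x.1.1⟩ : Σ n, Fin (Mn n)) = x.1
      rw [hqx]
    · have := ent_eq_of_condH_eq_zero (C.decodes k q hq)
      rwa [ker_tuple_eq_inf] at this

theorem pow_le_of_isPIR (hK : 1 ≤ K) (hN : 0 < N) (hLw : 0 < Lw) (hLx : 0 < Lx) (hC : C.IsPIR)
    (hrate : Lw / (N * Lx) = CK N K) (n : Fin N) : N ^ (K - 1) ≤ Mn n := by
  obtain ⟨μ, hμ, hsum, hpriv⟩ := hC
  let k₀ : Fin K := ⟨0, hK⟩
  let G : (Σ n, Fin (Mn n)) → Prop := fun x =>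
    0 < ∑ q ∈ (C.Q k₀).filter (fun q => q x.1 = x.2), μ k₀ q
  have good {k : Fin K} {q : (n : Fin N) → Fin (Mn n)} (hq : q ∈ C.Q k) (hpos : 0 < μ k q)
      (n : Fin N) : G ⟨n, q n⟩ := by
    change 0 < _
    rw [hpriv k₀ k n (q n)]
    exact hpos.trans_le (Finset.single_le_sum (f := μ k) (fun q _ => hμ k q)
      (Finset.mem_filter.2 ⟨hq, rfl⟩))
  have hG : ∀ k x, G x → ∃ q ∈ C.Q k, q x.1 = x.2 ∧ ∀ n, G ⟨n, q n⟩ := by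
    rintro k ⟨n, m⟩ h
    change 0 < _ at h
    rw [hpriv k₀ k n m] at h
    obtain ⟨q, hq, hpos⟩ := Finset.exists_lt_of_sum_lt (f := fun _ => (0 : ℝ)) (g := μ k)
      (Finset.sum_const_zero.trans_lt h)
    rw [Finset.mem_filter] at hq
    exact ⟨q, hq.1, hq.2, good hq.1 hpos⟩
  obtain ⟨q, hq, hpos⟩ := Finset.exists_lt_of_sum_lt (s := C.Q k₀) (f := fun _ => (0 : ℝ))
    (g := μ k₀) (by rw [Finset.sum_const_zero, hsum]; exact one_pos)
  let T := C.tightSystem hN hLw hLx hrate G hG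
  refine (T.pow_le_card_answers hK (fun n => ⟨⟨⟨n, q n⟩, good hq hpos n⟩, rfl⟩) n).trans ?_
  have inj : Function.Injective fun i : {i : {x // G x} // T.db i = n} =>
      (Fin.cast (congrArg Mn i.2) i.1.1.2 : Fin (Mn n)) := by
    rintro ⟨⟨⟨m, a⟩, ha⟩, rfl⟩ ⟨⟨⟨m', a'⟩, ha'⟩, h⟩ heq
    obtain rfl : m' = m := h
    obtain rfl : a = a' := heq
    rfl
  simpa using Nat.card_le_card_of_injective _ inj

end IRScheme

/-- The uniform distribution on a finite type. -/
abbrev FinProbSpace.uniform (Ω : Type) [Fintype Ω] [Nonempty Ω] : FinProbSpace where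
  Ω := Ω
  p _ := (Fintype.card Ω : ℝ)⁻¹
  nonneg _ := by positivity
  sum_one := by simp

namespace FinProbSpace

variable {Ω B : Type} [AddCommGroup Ω] [Fintype Ω] [AddCommGroup B] [Fintype B] [DecidableEq B]

theorem prob_uniform_of_surjective {X : Ω →+ B} (hX : Function.Surjective X) (b : B) :
    (uniform Ω).prob X b = (Fintype.card B : ℝ)⁻¹ := by
  have shift (b' : B) : (uniform Ω).prob X b' = (uniform Ω).prob X b := by
    obtain ⟨g, hg⟩ := hX (b - b')
    rw [prob, prob]
    refine Fintype.sum_equiv (Equiv.addLeft g) _ _ fun ω => ?_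
    have : X ω = b' ↔ X (Equiv.addLeft g ω) = b := by
      rw [Equiv.coe_addLeft, map_add, hg, sub_add_eq_add_sub, sub_eq_iff_eq_add, add_right_inj]
    simp only [this]
  have htotal := (uniform Ω).sum_prob_mul X fun _ => 1
  simp only [mul_one, shift] at htotal
  rw [(uniform Ω).sum_one] at htotal
  simp only [Finset.sum_const, Finset.card_univ, nsmul_eq_mul] at htotal
  exact eq_inv_of_mul_eq_one_right htotal

theorem H_uniform_of_surjective {X : Ω →+ B} (hX : Function.Surjective X) :
    (uniform Ω).H X = Real.logb 2 (Fintype.card B) := by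
  simp only [H, prob_uniform_of_surjective hX, Real.logb_inv, mul_neg, neg_neg,
    Finset.sum_const, Finset.card_univ, nsmul_eq_mul]
  rw [mul_inv_cancel_left₀ (Nat.cast_ne_zero.2 Fintype.card_ne_zero)]

end FinProbSpace

namespace ShiftedCode

variable {K N : ℕ} [NeZero N]

/-- A message of the shifted code: one block of `N - 1` bits for each shift `c`. -/
abbrev Msg (K N : ℕ) [NeZero N] : Type := (Fin K → Fin N) → {j : Fin N // j ≠ 0} → ZMod 2

/-- The bits of block `c`, preceded by a zero in position `0`. -/
def bit (w : Msg K N) (c : Fin K → Fin N) (j : Fin N) : ZMod 2 :=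
  if h : j ≠ 0 then w c ⟨j, h⟩ else 0

@[simp]
theorem bit_zero (w : Msg K N) (c : Fin K → Fin N) : bit w c 0 = 0 := by simp [bit]

theorem bit_add (w w' : Msg K N) (c : Fin K → Fin N) (j : Fin N) :
    bit (w + w') c j = bit w c j + bit w' c j := by
  unfold bit
  split_ifs <;> simp

/-- The answer with index `a`: in block `c`, the sum of the bits in positions `a l + c l`. -/
def answer (a : Fin K → Fin N) : (Fin K → Msg K N) →+ ((Fin K → Fin N) → ZMod 2) :=
  AddMonoidHom.mk' (fun ω c => ∑ l, bit (ω l) c (a l + c l)) fun ω ω' => by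
    ext c
    simp [bit_add, Finset.sum_add_distrib]

theorem answer_apply (a : Fin K → Fin N) (ω : Fin K → Msg K N) (c : Fin K → Fin N) :
    answer a ω c = ∑ l, bit (ω l) c (a l + c l) := rfl

theorem answer_neg_self (a : Fin K → Fin N) (ω : Fin K → Msg K N) : answer a ω (-a) = 0 := by
  simp [answer_apply]

/-- The answer with index `a` without the block in which it vanishes. -/
def reducedAnswer (a : Fin K → Fin N) :
    (Fin K → Msg K N) →+ ({c : Fin K → Fin N // c ≠ -a} → ZMod 2) :=
  AddMonoidHom.mk' (fun ω c => answer a ω c.1) fun ω ω' => by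
    ext c
    simp

theorem ker_answer (a : Fin K → Fin N) :
    Setoid.ker (answer a) = Setoid.ker (reducedAnswer a) := by
  ext ω ω'
  simp only [Setoid.ker_def]
  refine ⟨fun h => funext fun c => congrFun h c.1, fun h => funext fun c => ?_⟩
  by_cases hc : c = -a
  · rw [hc, answer_neg_self, answer_neg_self]
  · exact congrFun h ⟨c, hc⟩

theorem reducedAnswer_surjective (a : Fin K → Fin N) :
    Function.Surjective (reducedAnswer a) := by
  intro g
  have hex (c : {c : Fin K → Fin N // c ≠ -a}) : ∃ l, a l + c.1 l ≠ 0 := by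
    by_contra! h
    exact c.2 (eq_neg_of_add_eq_zero_right (funext h))
  choose l hl using hex
  refine ⟨fun k c _ => if h : c ≠ -a then (if k = l ⟨c, h⟩ then g ⟨c, h⟩ else 0) else 0, ?_⟩
  ext c
  change answer a _ c.1 = _
  rw [answer_apply, Finset.sum_eq_single (l c)]
  · simp [bit, hl, c.2]
  · intro k _ hk
    simp [bit, c.2, hk]
  · simp

theorem H_answer (a : Fin K → Fin N) :
    (FinProbSpace.uniform (Fin K → Msg K N)).H (answer a) = (N : ℝ) ^ K - 1 := by
  rw [FinProbSpace.H_eq_ent, ker_answer, ← FinProbSpace.H_eq_ent,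
    FinProbSpace.H_uniform_of_surjective (reducedAnswer_surjective a)]
  have hpos : 1 ≤ N ^ K := Nat.one_le_pow _ _ (NeZero.pos N)
  have hcard : Fintype.card {c : Fin K → Fin N // c ≠ -a} = N ^ K - 1 := by
    simp [Fintype.card_subtype_compl]
  rw [Fintype.card_fun, hcard, ZMod.card, Nat.cast_pow, Real.logb_pow, Nat.cast_ofNat,
    Real.logb_self_eq_one one_lt_two, mul_one, Nat.cast_sub hpos]
  simp

theorem card_msg : Fintype.card (Msg K N) = 2 ^ ((N - 1) * N ^ K) := by
  simp [Fintype.card_subtype_compl, pow_mul]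

theorem H_msg (k : Fin K) :
    (FinProbSpace.uniform (Fin K → Msg K N)).H (fun ω => ω k) = ((N : ℝ) - 1) * N ^ K := by
  have := FinProbSpace.H_uniform_of_surjective
    (X := Pi.evalAddMonoidHom (fun _ : Fin K => Msg K N) k) (Function.surjective_eval k)
  refine this.trans ?_
  rw [card_msg, Nat.cast_pow, Real.logb_pow, Nat.cast_ofNat,
    Real.logb_self_eq_one one_lt_two, mul_one, Nat.cast_mul,
    Nat.cast_sub (NeZero.one_le (n := N))]
  simp

theorem iIndep_msg :
    (FinProbSpace.uniform (Fin K → Msg K N)).iIndep fun k ω => ω k := by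
  intro a
  have h1 := FinProbSpace.prob_uniform_of_surjective (X := AddMonoidHom.id (Fin K → Msg K N))
    Function.surjective_id a
  have h2 (k : Fin K) := FinProbSpace.prob_uniform_of_surjective
    (X := Pi.evalAddMonoidHom (fun _ : Fin K => Msg K N) k) (Function.surjective_eval k) (a k)
  refine h1.trans ((Finset.prod_congr rfl fun k _ => h2 k).trans ?_).symm
  rw [Finset.prod_const, Finset.card_univ, Fintype.card_fin,
    Fintype.card_fun (α := Fin K), Fintype.card_fin, Nat.cast_pow, inv_pow]

/-- The answers indexed by a line in direction `k` determine the message `k`. -/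
theorem eq_of_answer_line_eq (k : Fin K) (e : Fin K → Fin N) {ω ω' : Fin K → Msg K N}
    (h : ∀ n, answer (e + Pi.single k n) ω = answer (e + Pi.single k n) ω') : ω k = ω' k := by
  have split (ω : Fin K → Msg K N) (c : Fin K → Fin N) (n : Fin N) :
      answer (e + Pi.single k n) ω c =
        bit (ω k) c (e k + n + c k) + ∑ l ∈ Finset.univ.erase k, bit (ω l) c (e l + c l) := by
    rw [answer_apply, ← Finset.add_sum_erase _ _ (Finset.mem_univ k)]
    congr 1
    · simp
    · refine Finset.sum_congr rfl fun l hl => ?_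
      simp [Finset.ne_of_mem_erase hl]
  ext c ⟨j, hj⟩
  have h0 := congrFun (h (-e k - c k)) c
  have h1 := congrFun (h (j - e k - c k)) c
  rw [split, split] at h0 h1
  rw [show e k + (-e k - c k) + c k = 0 by abel, bit_zero, bit_zero, zero_add, zero_add] at h0
  rw [show e k + (j - e k - c k) + c k = j by abel, h0] at h1
  simpa [bit, hj] using add_right_cancel h1

/-- The index of the answer of database `n` to the query `b`; its coordinates sum to `n`. -/
def point (n : Fin N) (b : Fin K → Fin N) : Fin (K + 1) → Fin N := Fin.cons (n - ∑ j, b j) b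

/-- The query sent to database `n` to retrieve message `k` with randomness `b`. -/
def query (k : Fin (K + 1)) (b : Fin K → Fin N) (n : Fin N) : Fin K → Fin N :=
  b + fun j => (Pi.single k n : Fin (K + 1) → Fin N) j.succ

theorem point_query (k : Fin (K + 1)) (b : Fin K → Fin N) (n : Fin N) :
    point n (query k b n) = point 0 b + Pi.single k n := by
  have hsum : ∑ j, (Pi.single k n : Fin (K + 1) → Fin N) j = n := by simp
  rw [Fin.sum_univ_succ] at hsum
  funext i
  refine Fin.cases ?_ (fun j => ?_) i
  · simp only [point, query, Fin.cons_zero, Pi.add_apply, Finset.sum_add_distrib]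
    nth_rewrite 1 [← hsum]
    abel
  · simp [point, query]

/-- The set of decoding tuples for message `k`. -/
def decodingSets (N : ℕ) [NeZero N] (k : Fin (K + 1)) : Finset (Fin N → Fin (N ^ K)) :=
  Finset.univ.image fun b n => finFunctionFinEquiv (query k b n)

theorem query_injective (k : Fin (K + 1)) (n : Fin N) :
    Function.Injective fun b => query k b n := fun _ _ h => add_right_cancel h

theorem card_decodingSets (k : Fin (K + 1)) : (decodingSets N k).card = N ^ K := by
  rw [decodingSets, Finset.card_image_of_injective]
  · simp
  · intro b b' h
    exact query_injective k 0 (finFunctionFinEquiv.injective (congrFun h 0))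

theorem card_filter_decodingSets (k : Fin (K + 1)) (n : Fin N) (m : Fin (N ^ K)) :
    ((decodingSets N k).filter fun q => q n = m).card = 1 := by
  obtain ⟨b, hb⟩ : ∃ b, query k b n = finFunctionFinEquiv.symm m :=
    ⟨_, sub_add_cancel _ _⟩
  refine Finset.card_eq_one.2 ⟨fun n => finFunctionFinEquiv (query k b n), ?_⟩
  ext q
  simp only [decodingSets, Finset.mem_filter, Finset.mem_image, Finset.mem_univ, true_and,
    Finset.mem_singleton]
  constructor
  · rintro ⟨⟨b', rfl⟩, h⟩
    rw [query_injective k n (((Equiv.eq_symm_apply _).2 h).trans hb.symm)]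
  · rintro rfl
    exact ⟨⟨b, rfl⟩, by simp only [hb, Equiv.apply_symm_apply]⟩

/-- A capacity achieving scheme with `N ^ K` answers per database for `K + 1` messages. -/
def scheme (K N : ℕ) [NeZero N] : IRScheme (K + 1) N (fun _ => N ^ K)
    (((N : ℝ) - 1) * N ^ (K + 1)) ((N : ℝ) ^ (K + 1) - 1) where
  P := FinProbSpace.uniform (Fin (K + 1) → Msg (K + 1) N)
  V := Msg (K + 1) N
  V' := (Fin (K + 1) → Fin N) → ZMod 2
  W k ω := ω k
  A n m := answer (point n (finFunctionFinEquiv.symm m))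
  indep := iIndep_msg
  HW := H_msg
  ans_fn n m := ⟨answer (point n (finFunctionFinEquiv.symm m)), fun _ => rfl⟩
  HA _ _ := H_answer _
  Q := decodingSets N
  Q_nonempty k := Finset.univ_nonempty.image _
  decodes k q hq := by
    obtain ⟨b, -, rfl⟩ := Finset.mem_image.1 hq
    rw [FinProbSpace.condH, FinProbSpace.H_eq_ent, FinProbSpace.H_eq_ent, sub_eq_zero]
    congr 1
    ext ω ω'
    simp only [Setoid.ker_def, Prod.mk.injEq, and_iff_right_iff_imp]
    intro h
    refine eq_of_answer_line_eq k (point 0 b) fun n => ?_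
    rw [← point_query]
    simpa [FinProbSpace.tuple] using congrFun h n

theorem isPIR_scheme : (scheme K N).IsPIR := by
  have hN : (N : ℝ) ≠ 0 := Nat.cast_ne_zero.2 (NeZero.ne N)
  refine ⟨fun _ _ => ((N : ℝ) ^ K)⁻¹, fun _ _ => by positivity, fun k => ?_, fun k k' n m => ?_⟩
  · change ∑ q ∈ decodingSets N k, _ = _
    rw [Finset.sum_const, card_decodingSets, nsmul_eq_mul, Nat.cast_pow,
      mul_inv_cancel₀ (pow_ne_zero K hN)]
  · change ∑ q ∈ (decodingSets N k).filter _, _ = ∑ q ∈ (decodingSets N k').filter _, _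
    rw [Finset.sum_const, Finset.sum_const, card_filter_decodingSets, card_filter_decodingSets]

end ShiftedCode

theorem rate_eq_CK {K N : ℕ} (hK : K ≠ 0) (hN : 2 ≤ N) :
    (((N : ℝ) - 1) * N ^ K) / (N * ((N : ℝ) ^ K - 1)) = CK N K := by
  have h1 : (1 : ℝ) < N := by exact_mod_cast hN
  have h2 : (1 : ℝ) < (N : ℝ) ^ K := one_lt_pow₀ h1 hK
  have h3 : (N : ℝ) - 1 ≠ 0 := (sub_pos.2 h1).ne'
  have h4 : (N : ℝ) ^ K - 1 ≠ 0 := (sub_pos.2 h2).ne'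
  have h5 : (N : ℝ) ≠ 0 := by positivity
  have h6 : 1 - (N : ℝ) ≠ 0 := by rw [← neg_sub]; exact neg_ne_zero.2 h3
  rw [CK, geom_sum_eq (by rw [one_div]; exact inv_ne_one.2 h1.ne'), inv_div, div_pow, one_pow]
  have e1 : 1 / (N : ℝ) - 1 = -((N - 1) / N) := by field_simp; ring
  have e2 : 1 / (N : ℝ) ^ K - 1 = -((N ^ K - 1) / N ^ K) := by field_simp; ring
  rw [e1, e2, neg_div_neg_eq]
  field_simp

/-- Minimum upload cost of capacity achieving PIR_max, Corollary 5:
(i) every capacity achieving PIR_max scheme in which every possible answer of every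
database belongs to some decoding set has `M_n ≥ N^{K-1}` for every database `n`;
(ii) there is a capacity achieving PIR_max scheme with `M_n = N^{K-1}` for every `n`, in
which the user selects a decoding set of the desired message uniformly at random among
`N^{K-1}` decoding sets (so the uniform distribution already guarantees privacy). -/
theorem pir_min_upload (K N : ℕ) (hK : 1 ≤ K) (hN : 2 ≤ N) :
    (∀ (Mn : Fin N → ℕ) (Lw Lx : ℝ), 0 < Lw → 0 < Lx →
      ∀ C : IRScheme K N Mn Lw Lx, C.IsPIR →
        (∀ (n : Fin N) (m : Fin (Mn n)), ∃ k, ∃ q ∈ C.Q k, q n = m) →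
        Lw / (N * Lx) = CK N K → ∀ n : Fin N, N ^ (K - 1) ≤ Mn n) ∧
    (∃ (Lw Lx : ℝ), 0 < Lw ∧ 0 < Lx ∧
      ∃ C : IRScheme K N (fun _ => N ^ (K - 1)) Lw Lx,
        C.IsPIR ∧ Lw / (N * Lx) = CK N K ∧
        (∀ k : Fin K, (C.Q k).card = N ^ (K - 1)) ∧
        (∀ (k k' : Fin K) (n : Fin N) (m : Fin (N ^ (K - 1))),
          ((C.Q k).filter (fun q => q n = m)).card =
            ((C.Q k').filter (fun q => q n = m)).card)) := by
  have hN0 : 0 < N := by omega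
  refine ⟨fun Mn Lw Lx hLw hLx C hC _ hrate n => C.pow_le_of_isPIR hK hN0 hLw hLx hC hrate n, ?_⟩
  obtain ⟨K, rfl⟩ := Nat.exists_eq_add_of_le' hK
  have : NeZero N := ⟨hN0.ne'⟩
  have h1 : (1 : ℝ) < N := by exact_mod_cast hN
  have h2 : (1 : ℝ) < (N : ℝ) ^ (K + 1) := one_lt_pow₀ h1 K.succ_ne_zero
  refine ⟨((N : ℝ) - 1) * N ^ (K + 1), (N : ℝ) ^ (K + 1) - 1, mul_pos (sub_pos.2 h1) (by linarith),
    sub_pos.2 h2, ShiftedCode.scheme K N, ShiftedCode.isPIR_scheme,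
    rate_eq_CK K.succ_ne_zero hN, ShiftedCode.card_decodingSets, fun k k' n m => ?_⟩
  exact (ShiftedCode.card_filter_decodingSets k n m).trans
    (ShiftedCode.card_filter_decodingSets k' n m).symm
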